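/- arXiv:math/0009234 — 2 statements merged into one kernel-verified Lean document; each statement's English description precedes it below -/
import Mathlib

section
/- Let R be a ring and let f : C → D be a chain map of nonnegatively graded chain complexes of finitely generated free R-modules such that H_0(f) : H_0(C) → H_0(D) is bijective and H_1(f) : H_1(C) → H_1(D) is surjective. Then there exist a nonnegatively graded chain complex C' of finitely generated free R-modules with C'_n = C_n for all n ≥ 3, a chain map ι : C → C' which is a chain homotopy equivalence and equals the identity in all degrees n ≥ 3, and a chain map f' : C' → D such that f' ∘ ι = f and f'_0 : C'_0 → D_0 is an isomorphism. -/
open CategoryTheory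

open CategoryTheory.Limits

noncomputable section

universe v u

variable {V : Type u} [Category.{v} V] [Preadditive V] {C D : ChainComplex V ℕ}

/-- A homotopy inverse of `f` in degree `0`, together with homotopies in lowest degree and
a null-homotopy of their incompatibility. -/
structure ZeroInverse (f : C ⟶ D) where
  /-- the inverse in degree `0` -/
  s : D.X 0 ⟶ C.X 0
  /-- the homotopy on `D` -/
  t : D.X 0 ⟶ D.X 1
  /-- the homotopy on `C` -/
  a : C.X 0 ⟶ C.X 1
  /-- the null-homotopy -/
  w : C.X 0 ⟶ D.X 2
  t_d : t ≫ D.d 1 0 = 𝟙 _ - s ≫ f.f 0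
  a_d : a ≫ C.d 1 0 = 𝟙 _ - f.f 0 ≫ s
  w_d : w ≫ D.d 2 1 = a ≫ f.f 1 - f.f 0 ≫ t

namespace ZeroInverse

attribute [simp] t_d a_d w_d

variable {f : C ⟶ D} (S : ZeroInverse f)

@[simp]
lemma t_d_assoc {Z : V} (g : D.X 0 ⟶ Z) : S.t ≫ D.d 1 0 ≫ g = (𝟙 _ - S.s ≫ f.f 0) ≫ g := by
  rw [← S.t_d, Category.assoc]

@[simp]
lemma a_d_assoc {Z : V} (g : C.X 0 ⟶ Z) : S.a ≫ C.d 1 0 ≫ g = (𝟙 _ - f.f 0 ≫ S.s) ≫ g := by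
  rw [← S.a_d, Category.assoc]

variable [HasBinaryBiproducts V]

/-- The objects of the aligned complex. -/
def alignedX (C D : ChainComplex V ℕ) : ℕ → V
  | 0 => D.X 0
  | 1 => C.X 1 ⊞ D.X 0
  | 2 => C.X 2 ⊞ C.X 0
  | n + 3 => C.X (n + 3)

/-- The differential of the aligned complex from degree `1` to degree `0`. -/
def d₁ : C.X 1 ⊞ D.X 0 ⟶ D.X 0 :=
  biprod.desc (C.d 1 0 ≫ f.f 0) (S.t ≫ D.d 1 0)

/-- The differential of the aligned complex from degree `2` to degree `1`. -/
def d₂ : C.X 2 ⊞ C.X 0 ⟶ C.X 1 ⊞ D.X 0 :=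
  biprod.desc (C.d 2 1 ≫ biprod.inl) (biprod.lift S.a (-f.f 0))

/-- The differentials of the aligned complex. -/
def alignedD : ∀ i j, alignedX C D i ⟶ alignedX C D j
  | 1, 0 => S.d₁
  | 2, 1 => S.d₂
  | 3, 2 => C.d 3 2 ≫ biprod.inl
  | i + 3, j + 3 => C.d (i + 3) (j + 3)
  | _, _ => 0

/-- The complex obtained from `C` by replacing `C₀` by `D₀`, adding `D₀` in degree `1`
and `C₀` in degree `2`. -/
def aligned : ChainComplex V ℕ where
  X := alignedX C D
  d := S.alignedD
  shape i j hij := by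
    rcases i with _ | _ | _ | _ | i <;> rcases j with _ | _ | _ | j <;>
      first
        | rfl
        | exact absurd rfl hij
        | exact C.shape _ _ (fun h => hij h)
  d_comp_d' i j k hij hjk := by
    obtain rfl : j + 1 = i := hij
    obtain rfl : k + 1 = j := hjk
    rcases k with _ | _ | _ | k
    · have h : S.d₂ ≫ S.d₁ = 0 := by
        apply biprod.hom_ext' <;> simp [d₁, d₂, biprod.lift_desc]
      exact h
    · have h : (C.d 3 2 ≫ biprod.inl) ≫ S.d₂ = 0 := by simp [d₂]
      exact h
    · have h : C.d 4 3 ≫ C.d 3 2 ≫ (biprod.inl : _ ⟶ C.X 2 ⊞ C.X 0) = 0 := by simp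
      exact h
    · exact C.d_comp_d _ _ _

/-- The inclusion of `C` in the aligned complex. -/
def ι : C ⟶ S.aligned where
  f
    | 0 => f.f 0
    | 1 => biprod.inl
    | 2 => biprod.inl
    | n + 3 => 𝟙 (C.X (n + 3))
  comm' i j hij := by
    obtain rfl : j + 1 = i := hij
    rcases j with _ | _ | _ | j
    · exact biprod.inl_desc _ _
    · exact biprod.inl_desc _ _
    · exact Category.id_comp _
    · exact (Category.id_comp _).trans (Category.comp_id _).symm

/-- The homotopy inverse of `ι` in degree `1`. -/
def ρ₁ : C.X 1 ⊞ D.X 0 ⟶ C.X 1 :=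
  biprod.desc (𝟙 _ - C.d 1 0 ≫ S.a) (S.s ≫ S.a)

/-- The homotopy inverse of the inclusion of `C` in the aligned complex. -/
def ρ : S.aligned ⟶ C where
  f
    | 0 => S.s
    | 1 => S.ρ₁
    | 2 => biprod.fst
    | n + 3 => 𝟙 (C.X (n + 3))
  comm' i j hij := by
    obtain rfl : j + 1 = i := hij
    rcases j with _ | _ | _ | j
    · have h : S.ρ₁ ≫ C.d 1 0 = S.d₁ ≫ S.s := by
        apply biprod.hom_ext' <;> simp [d₁, ρ₁]
      exact h
    · have h : biprod.fst ≫ C.d 2 1 = S.d₂ ≫ S.ρ₁ := by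
        apply biprod.hom_ext' <;> simp [d₂, ρ₁, biprod.lift_desc]
      exact h
    · have h : 𝟙 _ ≫ C.d 3 2 = (C.d 3 2 ≫ biprod.inl) ≫ (biprod.fst : C.X 2 ⊞ C.X 0 ⟶ _) := by
        simp
      exact h
    · exact (Category.id_comp _).trans (Category.comp_id _).symm

/-- The map from the aligned complex to `D`. -/
def toTarget : S.aligned ⟶ D where
  f
    | 0 => 𝟙 (D.X 0)
    | 1 => biprod.desc (f.f 1) S.t
    | 2 => biprod.desc (f.f 2) S.w
    | n + 3 => f.f (n + 3)
  comm' i j hij := by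
    obtain rfl : j + 1 = i := hij
    rcases j with _ | _ | _ | j
    · have h : biprod.desc (f.f 1) S.t ≫ D.d 1 0 = S.d₁ ≫ 𝟙 (D.X 0) := by
        apply biprod.hom_ext' <;> simp [d₁]
      exact h
    · have h : biprod.desc (f.f 2) S.w ≫ D.d 2 1 = S.d₂ ≫ biprod.desc (f.f 1) S.t := by
        apply biprod.hom_ext' <;> simp [d₂, biprod.lift_desc, sub_eq_add_neg]
      exact h
    · have h : f.f 3 ≫ D.d 3 2 = (C.d 3 2 ≫ biprod.inl) ≫ biprod.desc (f.f 2) S.w := by simp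
      exact h
    · exact f.comm _ _

lemma ι_toTarget : S.ι ≫ S.toTarget = f := by
  ext n
  rcases n with _ | _ | _ | n
  · exact Category.comp_id _
  · exact biprod.inl_desc _ _
  · exact biprod.inl_desc _ _
  · exact Category.id_comp _

/-- The homotopy from the identity of `C` to the composition through the aligned complex. -/
def homotopyιρ : Homotopy (𝟙 C) (S.ι ≫ S.ρ) where
  hom
    | 0, 1 => S.a
    | _, _ => 0
  zero i j hij := by
    rcases i with _ | i <;> rcases j with _ | _ | j <;>
      first
        | rfl
        | exact absurd rfl hij
  comm n := by
    rcases n with _ | n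
    · rw [Homotopy.prevD_chainComplex, Homotopy.dNext_zero_chainComplex]
      have h : 𝟙 (C.X 0) = 0 + S.a ≫ C.d 1 0 + f.f 0 ≫ S.s := by simp
      exact h
    rw [Homotopy.prevD_chainComplex, Homotopy.dNext_succ_chainComplex]
    rcases n with _ | _ | n
    · have h : 𝟙 (C.X 1) = C.d 1 0 ≫ S.a + 0 ≫ C.d 2 1 + biprod.inl ≫ S.ρ₁ := by simp [ρ₁]
      exact h
    · have h : 𝟙 (C.X 2) = C.d 2 1 ≫ 0 + 0 ≫ C.d 3 2 +
          biprod.inl ≫ (biprod.fst : C.X 2 ⊞ C.X 0 ⟶ _) := by simp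
      exact h
    · have h : 𝟙 (C.X (n + 3)) = C.d (n + 3) (n + 2) ≫ 0 + 0 ≫ C.d (n + 4) (n + 3) +
          𝟙 (C.X (n + 3)) ≫ 𝟙 (C.X (n + 3)) := by simp
      exact h

/-- The homotopy from degree `1` to degree `2` of the aligned complex. -/
def h₁ : C.X 1 ⊞ D.X 0 ⟶ C.X 2 ⊞ C.X 0 :=
  biprod.desc (C.d 1 0) (-S.s) ≫ biprod.inr

/-- The homotopy from the identity of the aligned complex to the composition through `C`. -/
def homotopyρι : Homotopy (𝟙 S.aligned) (S.ρ ≫ S.ι) where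
  hom
    | 0, 1 => (biprod.inr : D.X 0 ⟶ C.X 1 ⊞ D.X 0)
    | 1, 2 => S.h₁
    | _, _ => 0
  zero i j hij := by
    rcases i with _ | _ | i <;> rcases j with _ | _ | _ | j <;>
      first
        | rfl
        | exact absurd rfl hij
  comm n := by
    rcases n with _ | n
    · rw [Homotopy.prevD_chainComplex, Homotopy.dNext_zero_chainComplex]
      have h : 𝟙 (D.X 0) = 0 + biprod.inr ≫ S.d₁ + S.s ≫ f.f 0 := by simp [d₁]
      exact h
    rw [Homotopy.prevD_chainComplex, Homotopy.dNext_succ_chainComplex]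
    rcases n with _ | _ | n
    · have h : 𝟙 (C.X 1 ⊞ D.X 0) =
          S.d₁ ≫ biprod.inr + S.h₁ ≫ S.d₂ + S.ρ₁ ≫ biprod.inl := by
        apply biprod.hom_ext' <;> apply biprod.hom_ext <;> simp [d₁, d₂, h₁, ρ₁]
      exact h
    · have h : 𝟙 (C.X 2 ⊞ C.X 0) =
          S.d₂ ≫ S.h₁ + 0 ≫ C.d 3 2 ≫ biprod.inl + biprod.fst ≫ biprod.inl := by
        apply biprod.hom_ext' <;> apply biprod.hom_ext <;>
          simp [d₂, h₁, biprod.lift_desc_assoc]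
      exact h
    · have h : 𝟙 (S.aligned.X (n + 3)) = S.aligned.d (n + 3) (n + 2) ≫ 0 +
          0 ≫ S.aligned.d (n + 4) (n + 3) + 𝟙 _ ≫ 𝟙 _ := by simp
      exact h

/-- The inclusion of `C` in the aligned complex as a homotopy equivalence. -/
def homotopyEquiv : HomotopyEquiv C S.aligned where
  hom := S.ι
  inv := S.ρ
  homotopyHomInvId := S.homotopyιρ.symm
  homotopyInvHomId := S.homotopyρι.symm

end ZeroInverse

end

section Abelian

universe v u

variable {V : Type u} [Category.{v} V] [Abelian V] {I : Type*} {c : ComplexShape I}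
  {K L : HomologicalComplex V c} {P : V} [Projective P]

/-- If `f` is epi on homology, then every cycle of the target parametrized by a projective object
is homologous to the image of a cycle of the source. -/
lemma exists_cycle_add_boundary_of_epi_homologyMap (f : K ⟶ L) (i j k : I)
    (hi : c.prev j = i) (hk : c.next j = k) [Epi (HomologicalComplex.homologyMap f j)]
    (y : P ⟶ L.X j) (hy : y ≫ L.d j k = 0) :
    ∃ (z : P ⟶ K.X j) (w : P ⟶ L.X i), z ≫ K.d j k = 0 ∧ z ≫ f.f j + w ≫ L.d i j = y := by
  obtain ⟨A, π, _, z, hz, h⟩ := K.eq_liftCycles_homologyπ_up_to_refinements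
    (Projective.factorThru (L.liftCycles y k hk hy ≫ L.homologyπ j)
      (HomologicalComplex.homologyMap f j)) k hk
  have h' := h =≫ HomologicalComplex.homologyMap f j
  simp only [Category.assoc, Projective.factorThru_comp, HomologicalComplex.homologyπ_naturality,
    HomologicalComplex.liftCycles_comp_cyclesMap_assoc,
    HomologicalComplex.comp_liftCycles_assoc] at h'
  rw [L.liftCycles_comp_homologyπ_eq_iff_up_to_refinements i j k hi hk] at h'
  obtain ⟨A', π', _, w, hw⟩ := h'
  let σ := Projective.factorThru (𝟙 P) (π' ≫ π)
  have hσ : σ ≫ π' ≫ π = 𝟙 P := Projective.factorThru_comp _ _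
  refine ⟨σ ≫ π' ≫ z, σ ≫ w, by simp [hz], ?_⟩
  simpa [reassoc_of% hσ] using (σ ≫= hw).symm

/-- If `f` is mono on homology, then every cycle of the source parametrized by a projective object
whose image is a boundary is a boundary. -/
lemma exists_boundary_of_mono_homologyMap (f : K ⟶ L) (i j k : I)
    (hi : c.prev j = i) (hk : c.next j = k) [Mono (HomologicalComplex.homologyMap f j)]
    (x : P ⟶ K.X j) (hx : x ≫ K.d j k = 0) (w : P ⟶ L.X i) (hw : x ≫ f.f j = w ≫ L.d i j) :
    ∃ a : P ⟶ K.X i, a ≫ K.d i j = x := by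
  have h : K.liftCycles x k hk hx ≫ K.homologyπ j = 0 := by
    rw [← cancel_mono (HomologicalComplex.homologyMap f j)]
    simpa using L.liftCycles_homologyπ_eq_zero_of_boundary _ k hk w hw
  rw [K.liftCycles_comp_homologyπ_eq_zero_iff_up_to_refinements i j k hi hk] at h
  obtain ⟨A, π, _, a, ha⟩ := h
  have hσ : Projective.factorThru (𝟙 P) π ≫ π = 𝟙 P := Projective.factorThru_comp _ _
  exact ⟨Projective.factorThru (𝟙 P) π ≫ a, by rw [Category.assoc, ← ha, reassoc_of% hσ]⟩

lemma nonempty_zeroInverse {C D : ChainComplex V ℕ} (f : C ⟶ D) [Projective (C.X 0)]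
    [Projective (D.X 0)] [Epi (HomologicalComplex.homologyMap f 0)]
    [Mono (HomologicalComplex.homologyMap f 0)] [Epi (HomologicalComplex.homologyMap f 1)] :
    Nonempty (ZeroInverse f) := by
  obtain ⟨s, t, -, hst⟩ := exists_cycle_add_boundary_of_epi_homologyMap f 1 0 0
    (by simp) (by simp) (𝟙 (D.X 0)) (by simp)
  have ht : t ≫ D.d 1 0 = 𝟙 _ - s ≫ f.f 0 := by rw [← hst]; abel
  obtain ⟨a, ha⟩ := exists_boundary_of_mono_homologyMap f 1 0 0 (by simp) (by simp)
    (𝟙 (C.X 0) - f.f 0 ≫ s) (by simp) (f.f 0 ≫ t) (by simp [ht])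
  obtain ⟨z, w, hz, hw⟩ := exists_cycle_add_boundary_of_epi_homologyMap f 2 1 0
    (by simp) (by simp) (a ≫ f.f 1 - f.f 0 ≫ t) (by simp [ht, reassoc_of% ha])
  exact ⟨{ s, t, w, a := a - z, t_d := ht, a_d := by simp [ha, hz]
           w_d := by rw [Preadditive.sub_comp, sub_right_comm, ← hw]; abel }⟩

end Abelian

lemma ModuleCat.free_biprod {R : Type*} [Ring R] (M N : ModuleCat R) [Module.Free R M]
    [Module.Free R N] : Module.Free R (M ⊞ N : ModuleCat R) :=
  .of_equiv (ModuleCat.biprodIsoProd M N).symm.toLinearEquiv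

lemma ModuleCat.finite_biprod {R : Type*} [Ring R] (M N : ModuleCat R) [Module.Finite R M]
    [Module.Finite R N] : Module.Finite R (M ⊞ N : ModuleCat R) :=
  .equiv (ModuleCat.biprodIsoProd M N).symm.toLinearEquiv

/-- Semi-algebraic 0-skeleton alignment: if `H₀(f)` is bijective and `H₁(f)` is
surjective, `f : C → D` factors (on the nose) through a chain homotopy equivalence
`ι : C → C'` which is the identity in degrees `≥ 3`, via a chain map `f' : C' → D`
which is an isomorphism in degree 0. -/
theorem statement4 {R : Type*} [Ring R]
    (C D : ChainComplex (ModuleCat R) ℕ) (f : C ⟶ D)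
    (hCfree : ∀ n, Module.Free R (C.X n)) (hCfin : ∀ n, Module.Finite R (C.X n))
    (hDfree : ∀ n, Module.Free R (D.X n)) (hDfin : ∀ n, Module.Finite R (D.X n))
    (h0 : Function.Bijective (HomologicalComplex.homologyMap f 0))
    (h1 : Function.Surjective (HomologicalComplex.homologyMap f 1)) :
    ∃ (C' : ChainComplex (ModuleCat R) ℕ)
      (_ : ∀ n, Module.Free R (C'.X n)) (_ : ∀ n, Module.Finite R (C'.X n))
      (hX : ∀ n, 3 ≤ n → C'.X n = C.X n)
      (e : HomotopyEquiv C C') (f' : C' ⟶ D),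
      (∀ n (hn : 3 ≤ n), e.hom.f n = eqToHom (hX n hn).symm) ∧
      e.hom ≫ f' = f ∧ IsIso (f'.f 0) := by
  have := (ModuleCat.epi_iff_surjective _).2 h0.2
  have := (ModuleCat.mono_iff_injective _).2 h0.1
  have := (ModuleCat.epi_iff_surjective _).2 h1
  obtain ⟨S⟩ := nonempty_zeroInverse f
  refine ⟨S.aligned, ?_, ?_, ?_, S.homotopyEquiv, S.toTarget, ?_, S.ι_toTarget,
    inferInstanceAs (IsIso (𝟙 (D.X 0)))⟩
  · rintro (_ | _ | _ | n)
    exacts [hDfree 0, ModuleCat.free_biprod _ _, ModuleCat.free_biprod _ _, hCfree (n + 3)]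
  · rintro (_ | _ | _ | n)
    exacts [hDfin 0, ModuleCat.finite_biprod _ _, ModuleCat.finite_biprod _ _, hCfin (n + 3)]
  · rintro (_ | _ | _ | n) hn
    exacts [by omega, by omega, by omega, rfl]
  · rintro (_ | _ | _ | n) hn
    exacts [by omega, by omega, by omega, rfl]
end

section
/- Let R be a ring and let f : C → D be a chain map of nonnegatively graded chain complexes of finitely generated free R-modules such that H_0(f) : H_0(C) → H_0(D) is bijective and H_1(f) : H_1(C) → H_1(D) is surjective. Then there exist nonnegatively graded chain complexes C', D' of finitely generated free R-modules, chain homotopy equivalences a : C → C' and b : D → D' which are isomorphisms in every degree n ≥ 3, and a chain map f' : C' → D' whose components f'_0 and f'_1 in degrees 0 and 1 are isomorphisms, such that f' ∘ a is chain homotopic to b ∘ f. -/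
open CategoryTheory

open Limits

section

variable {V : Type*} [Category* V] [Preadditive V] [HasZeroObject V]

/-- The contractible chain complex with `X` in degrees `n + 1` and `n`. -/
noncomputable abbrev ChainComplex.disk (X : V) (n : ℕ) : ChainComplex V ℕ :=
  HomologicalComplex.double (𝟙 X) (show (ComplexShape.down ℕ).Rel (n + 1) n from rfl)

namespace ChainComplex.disk

variable (X : V) (n : ℕ)

/-- The identification of the top chains of a disk. -/
noncomputable abbrev topIso : (disk X n).X (n + 1) ≅ X := HomologicalComplex.doubleXIso₀ _ _

/-- The identification of the bottom chains of a disk. -/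
noncomputable abbrev bottomIso : (disk X n).X n ≅ X :=
  HomologicalComplex.doubleXIso₁ _ _ n.succ_ne_self

lemma d_eq : (disk X n).d (n + 1) n = (topIso X n).hom ≫ (bottomIso X n).inv := by
  rw [HomologicalComplex.double_d _ _ n.succ_ne_self, Category.id_comp]

lemma isZero_X {m : ℕ} (h₀ : m ≠ n) (h₁ : m ≠ n + 1) : IsZero ((disk X n).X m) :=
  HomologicalComplex.isZero_double_X _ _ m h₁ h₀

variable {X n}

/-- A chain map from a disk is determined by its value in the top degree. -/
noncomputable def desc {K : ChainComplex V ℕ} (φ : X ⟶ K.X (n + 1)) : disk X n ⟶ K :=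
  HomologicalComplex.mkHomFromDouble _ n.succ_ne_self φ (φ ≫ K.d (n + 1) n) (by simp) (by simp)

@[simp]
lemma desc_f_bottom {K : ChainComplex V ℕ} (φ : X ⟶ K.X (n + 1)) :
    (desc φ).f n = (bottomIso X n).hom ≫ φ ≫ K.d (n + 1) n := by
  simp [desc]

@[simp]
lemma desc_f_top {K : ChainComplex V ℕ} (φ : X ⟶ K.X (n + 1)) :
    (desc φ).f (n + 1) = (topIso X n).hom ≫ φ := by
  simp [desc]

/-- A chain map to a disk is determined by its value in the bottom degree. -/
noncomputable def lift {K : ChainComplex V ℕ} (ψ : K.X n ⟶ X) : K ⟶ disk X n where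
  f m :=
    if h₀ : m = n then eqToHom (by rw [h₀]) ≫ ψ ≫ (bottomIso X n).inv ≫ eqToHom (by rw [h₀])
    else if h₁ : m = n + 1 then
      K.d m n ≫ ψ ≫ (topIso X n).inv ≫ eqToHom (by rw [h₁])
    else 0
  comm' i j hij := by
    obtain rfl : j + 1 = i := hij
    by_cases h₀ : j = n
    · subst h₀
      simp [d_eq]
    · by_cases h₁ : j = n + 1
      · subst h₁
        rw [HomologicalComplex.double_d_eq_zero₁ _ _ _ _ h₀]
        simp
      · exact (isZero_X X n h₀ h₁).eq_of_tgt _ _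

@[simp]
lemma lift_f_bottom {K : ChainComplex V ℕ} (ψ : K.X n ⟶ X) :
    (lift ψ).f n = ψ ≫ (bottomIso X n).inv := by
  simp [lift]

variable (X n) in
/-- Disks are contractible. -/
noncomputable def homotopyIdZero : Homotopy (𝟙 (disk X n)) 0 :=
  (Homotopy.ofEq (by
    refine HomologicalComplex.from_double_hom_ext ?_ ?_
    · rw [Homotopy.nullHomotopicMap'_f (k₂ := n + 2) (k₀ := n) rfl rfl]
      simp [d_eq]
    · by_cases hn : ∃ k, k + 1 = n
      · obtain ⟨k, hk⟩ := hn
        rw [Homotopy.nullHomotopicMap'_f (k₂ := n + 1) (k₀ := k) rfl hk]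
        simp [d_eq, show k ≠ n by lia]
      · rw [Homotopy.nullHomotopicMap'_f_of_not_rel_left (k₁ := n + 1) rfl
          (fun l hl => hn ⟨l, hl⟩)]
        simp [d_eq])).trans
  (Homotopy.nullHomotopy' fun i j hij => if h : i = n then
      eqToHom (by rw [h]) ≫ (bottomIso X n).hom ≫ (topIso X n).inv ≫
        eqToHom (by rw [← h, show i + 1 = j from hij])
    else 0)

end ChainComplex.disk

end

namespace HomologicalComplex

variable {V : Type*} [Category* V] [Preadditive V] [HasBinaryBiproducts V]
  {ι : Type*} {c : ComplexShape ι}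

/-- Adding a contractible summand does not change the homotopy type. -/
noncomputable def homotopyEquivBiprod (K L : HomologicalComplex V c) (h : Homotopy (𝟙 L) 0) :
    HomotopyEquiv K (K ⊞ L) where
  hom := biprod.inl
  inv := biprod.fst
  homotopyHomInvId := Homotopy.ofEq (by simp)
  homotopyInvHomId :=
    (Homotopy.ofEq (by simp)).trans
      ((((h.compRight biprod.inr).compLeft biprod.snd).symm.add
        (Homotopy.refl (biprod.fst ≫ biprod.inl))).trans
          (Homotopy.ofEq (by rw [Category.id_comp, add_comm, biprod.total])))

lemma isIso_inl_f (K L : HomologicalComplex V c) {i : ι} (h : IsZero (L.X i)) :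
    IsIso ((biprod.inl : K ⟶ K ⊞ L).f i) :=
  ⟨(biprod.fst : K ⊞ L ⟶ K).f i, by simp, by
    have : (biprod.snd : K ⊞ L ⟶ L).f i = 0 := h.eq_of_tgt _ _
    rw [← biprod_total_f, this]
    simp⟩

end HomologicalComplex

namespace ChainComplex

section

variable {V : Type*} [Category* V] [Preadditive V] [HasZeroObject V] [HasBinaryBiproducts V]
  {C D : ChainComplex V ℕ} (f : C ⟶ D) {n : ℕ}
  (g : D.X n ⟶ C.X n) (h : D.X n ⟶ D.X (n + 1))

/-- The chain map obtained from `f` by adding disks to its source and target, with the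
disks mapped through a partial right inverse `g` and a homotopy `h`. -/
noncomputable def stabilize : C ⊞ disk (D.X n) n ⟶ D ⊞ disk (C.X n) n :=
  biprod.desc (biprod.lift f (disk.lift (𝟙 _)))
    (biprod.lift (disk.desc (-h)) (disk.desc (g ≫ (disk.topIso _ n).inv)))

lemma isIso_stabilize_f (w : g ≫ f.f n + h ≫ D.d (n + 1) n = 𝟙 _) :
    IsIso ((stabilize f g h).f n) := by
  have w' : h ≫ D.d (n + 1) n = 𝟙 _ - g ≫ f.f n := by rw [← w]; abel
  refine ⟨(biprod.fst : D ⊞ disk (C.X n) n ⟶ D).f n ≫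
      (g ≫ (biprod.inl : C ⟶ C ⊞ disk (D.X n) n).f n -
        (disk.bottomIso (D.X n) n).inv ≫ (biprod.inr : _ ⟶ C ⊞ disk (D.X n) n).f n) +
    (biprod.snd : D ⊞ disk (C.X n) n ⟶ _).f n ≫ (disk.bottomIso (C.X n) n).hom ≫
      ((𝟙 _ - f.f n ≫ g) ≫ (biprod.inl : C ⟶ C ⊞ disk (D.X n) n).f n +
        f.f n ≫ (disk.bottomIso (D.X n) n).inv ≫
          (biprod.inr : _ ⟶ C ⊞ disk (D.X n) n).f n), ?_, ?_⟩
  · apply HomologicalComplex.biprodX_ext_from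
    · simp [stabilize]
    · simp [stabilize, disk.d_eq, w']
      abel
  · apply HomologicalComplex.biprodX_ext_to
    · simp [stabilize, w']
    · simp [stabilize, disk.d_eq]

lemma inl_stabilize :
    biprod.inl ≫ stabilize f g h = f ≫ biprod.inl + disk.lift (𝟙 _) ≫ biprod.inr := by
  rw [stabilize, biprod.inl_desc]
  apply biprod.hom_ext <;> simp

/-- Stabilization does not change the homotopy class of a chain map. -/
noncomputable def stabilizeHomotopy :
    Homotopy (biprod.inl ≫ stabilize f g h) (f ≫ biprod.inl) :=
  (Homotopy.ofEq (by rw [inl_stabilize, Category.id_comp])).trans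
    (((Homotopy.refl (f ≫ biprod.inl)).add
      (((disk.homotopyIdZero (C.X n) n).compRight biprod.inr).compLeft
        (disk.lift (𝟙 _)))).trans (Homotopy.ofEq (by simp)))

lemma isIso_stabilize_f_of_ne {m : ℕ} (h₀ : m ≠ n) (h₁ : m ≠ n + 1) [IsIso (f.f m)] :
    IsIso ((stabilize f g h).f m) := by
  have := HomologicalComplex.isIso_inl_f C _ (disk.isZero_X (D.X n) n h₀ h₁)
  have := HomologicalComplex.isIso_inl_f D _ (disk.isZero_X (C.X n) n h₀ h₁)
  have e : (biprod.inl : C ⟶ C ⊞ disk (D.X n) n).f m ≫ (stabilize f g h).f m =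
      f.f m ≫ (biprod.inl : D ⟶ D ⊞ disk (C.X n) n).f m := by
    rw [← HomologicalComplex.comp_f, inl_stabilize, HomologicalComplex.add_f_apply,
      HomologicalComplex.comp_f, HomologicalComplex.comp_f,
      (disk.isZero_X (C.X n) n h₀ h₁).eq_of_tgt ((disk.lift (𝟙 (C.X n))).f m) 0,
      zero_comp, add_zero]
  exact IsIso.of_isIso_fac_left e

end

end ChainComplex

namespace HomologicalComplex

variable {A : Type*} [Category* A] [Abelian A] {ι : Type*} {c : ComplexShape ι}

/-- A cycle with trivial homology class, parametrized by a projective object, is a boundary. -/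
lemma exists_eq_comp_d_of_projective (K : HomologicalComplex A c) {P : A} [Projective P]
    {i j : ι} (hij : c.prev j = i) (z : P ⟶ K.cycles j) (hz : z ≫ K.homologyπ j = 0) :
    ∃ t : P ⟶ K.X i, t ≫ K.d i j = z ≫ K.iCycles j := by
  have ex := ShortComplex.exact_of_g_is_cokernel
    (ShortComplex.mk _ _ (K.toCycles_comp_homologyπ i j)) (K.homologyIsCokernel i j hij)
  refine ⟨ex.liftFromProjective z hz, ?_⟩
  rw [← K.toCycles_i i j]
  exact (Category.assoc _ _ _).symm.trans
    (congrArg (· ≫ K.iCycles j) (ex.liftFromProjective_comp z hz))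

variable {K L : HomologicalComplex A c} (f : K ⟶ L) {P : A} [Projective P] {i j : ι}

lemma exists_lift_of_epi_homologyMap (hij : c.prev j = i) [Epi (homologyMap f j)]
    (z : P ⟶ L.X j) {k : ι} (hk : c.next j = k) (hz : z ≫ L.d j k = 0) :
    ∃ (g : P ⟶ K.X j) (h : P ⟶ L.X i), g ≫ f.f j + h ≫ L.d i j = z := by
  let t := Projective.factorThru (L.liftCycles z k hk hz ≫ L.homologyπ j)
    (K.homologyπ j ≫ homologyMap f j)
  have ht : t ≫ K.homologyπ j ≫ homologyMap f j = L.liftCycles z k hk hz ≫ L.homologyπ j :=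
    Projective.factorThru_comp _ _
  obtain ⟨h, hh⟩ := L.exists_eq_comp_d_of_projective hij
    (L.liftCycles z k hk hz - t ≫ cyclesMap f j) (by
      rw [Preadditive.sub_comp, Category.assoc, ← homologyπ_naturality, ht, sub_self])
  exact ⟨t ≫ K.iCycles j, h, by simp [hh]⟩

lemma exists_lift_of_mono_homologyMap (hij : c.prev j = i) [Mono (homologyMap f j)]
    (z : P ⟶ K.X j) {k : ι} (hk : c.next j = k) (hz : z ≫ K.d j k = 0)
    (w : P ⟶ L.X i) (hw : z ≫ f.f j = w ≫ L.d i j) :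
    ∃ t : P ⟶ K.X i, t ≫ K.d i j = z := by
  obtain ⟨t, ht⟩ := K.exists_eq_comp_d_of_projective hij (K.liftCycles z k hk hz) (by
    rw [← cancel_mono (homologyMap f j), Category.assoc, homologyπ_naturality,
      ← Category.assoc, liftCycles_comp_cyclesMap,
      L.liftCycles_homologyπ_eq_zero_of_boundary _ _ _ w hw, zero_comp])
  exact ⟨t, by simpa using ht⟩

end HomologicalComplex

namespace ChainComplex

section

variable {A : Type*} [Category* A] [Abelian A] {C D : ChainComplex A ℕ} (f : C ⟶ D)

lemma exists_section_zero [Projective (D.X 0)]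
    [Epi (HomologicalComplex.homologyMap f 0)] :
    ∃ (g : D.X 0 ⟶ C.X 0) (h : D.X 0 ⟶ D.X 1), g ≫ f.f 0 + h ≫ D.d 1 0 = 𝟙 _ :=
  HomologicalComplex.exists_lift_of_epi_homologyMap f (by simp) (𝟙 _) (k := 0) (by simp)
    (by simp)

lemma exists_section_one [Projective (D.X 1)] [IsIso (f.f 0)]
    [Mono (HomologicalComplex.homologyMap f 0)] [Epi (HomologicalComplex.homologyMap f 1)] :
    ∃ (g : D.X 1 ⟶ C.X 1) (h : D.X 1 ⟶ D.X 2), g ≫ f.f 1 + h ≫ D.d 2 1 = 𝟙 _ := by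
  obtain ⟨t, ht⟩ := HomologicalComplex.exists_lift_of_mono_homologyMap f (i := 1) (by simp)
    (D.d 1 0 ≫ inv (f.f 0)) (k := 0) (by simp) (by simp) (𝟙 _) (by simp)
  obtain ⟨g, h, w⟩ := HomologicalComplex.exists_lift_of_epi_homologyMap f (i := 2) (by simp)
    (𝟙 _ - t ≫ f.f 1) (k := 0) (by simp) (by
      rw [Preadditive.sub_comp, Category.assoc, f.comm, ← Category.assoc, ht]
      simp)
  exact ⟨t + g, h, by rw [Preadditive.add_comp, add_assoc, w]; abel⟩

end

section

variable {R : Type*} [Ring R]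

lemma disk.free_and_finite (X : ModuleCat R) [Module.Free R X] [Module.Finite R X] (n m : ℕ) :
    Module.Free R ((disk X n).X m) ∧ Module.Finite R ((disk X n).X m) := by
  by_cases h₀ : m = n
  · subst h₀
    let e := (disk.bottomIso X m).toLinearEquiv
    exact ⟨.of_equiv e.symm, .equiv e.symm⟩
  by_cases h₁ : m = n + 1
  · subst h₁
    let e := (disk.topIso X n).toLinearEquiv
    exact ⟨.of_equiv e.symm, .equiv e.symm⟩
  have := ModuleCat.subsingleton_of_isZero (disk.isZero_X X n h₀ h₁)
  exact ⟨inferInstance, inferInstance⟩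

lemma biprod_free_and_finite (K L : ChainComplex (ModuleCat R) ℕ) (m : ℕ)
    [Module.Free R (K.X m)] [Module.Finite R (K.X m)]
    (h : Module.Free R (L.X m) ∧ Module.Finite R (L.X m)) :
    Module.Free R ((K ⊞ L).X m) ∧ Module.Finite R ((K ⊞ L).X m) := by
  obtain ⟨_, _⟩ := h
  let e := (HomologicalComplex.biprodXIso K L m ≪≫ ModuleCat.biprodIsoProd _ _).toLinearEquiv
  exact ⟨.of_equiv e.symm, .equiv e.symm⟩

/-- A chain map between complexes of finitely generated free modules which has a right inverse
up to boundaries in degree `n` becomes an isomorphism in degree `n` after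
adding disks to its source and target. -/
lemma exists_isIso_f {C D : ChainComplex (ModuleCat R) ℕ} (f : C ⟶ D)
    (hC : ∀ n, Module.Free R (C.X n) ∧ Module.Finite R (C.X n))
    (hD : ∀ n, Module.Free R (D.X n) ∧ Module.Finite R (D.X n)) (n : ℕ)
    (w : ∃ (g : D.X n ⟶ C.X n) (h : D.X n ⟶ D.X (n + 1)),
      g ≫ f.f n + h ≫ D.d (n + 1) n = 𝟙 _) :
    ∃ (C' D' : ChainComplex (ModuleCat R) ℕ)
      (_ : ∀ n, Module.Free R (C'.X n) ∧ Module.Finite R (C'.X n))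
      (_ : ∀ n, Module.Free R (D'.X n) ∧ Module.Finite R (D'.X n))
      (a : HomotopyEquiv C C') (b : HomotopyEquiv D D') (f' : C' ⟶ D'),
      (∀ m, m ≠ n → m ≠ n + 1 → IsIso (a.hom.f m)) ∧
      (∀ m, m ≠ n → m ≠ n + 1 → IsIso (b.hom.f m)) ∧
      IsIso (f'.f n) ∧
      (∀ m, m ≠ n → m ≠ n + 1 → IsIso (f.f m) → IsIso (f'.f m)) ∧
      Nonempty (Homotopy (a.hom ≫ f') (f ≫ b.hom)) := by
  obtain ⟨g, h, w⟩ := w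
  have := fun n => (hC n).1
  have := fun n => (hC n).2
  have := fun n => (hD n).1
  have := fun n => (hD n).2
  exact ⟨_, _, fun m => biprod_free_and_finite C (disk (D.X n) n) m (disk.free_and_finite _ _ _),
    fun m => biprod_free_and_finite D (disk (C.X n) n) m (disk.free_and_finite _ _ _),
    HomologicalComplex.homotopyEquivBiprod C _ (disk.homotopyIdZero _ _),
    HomologicalComplex.homotopyEquivBiprod D _ (disk.homotopyIdZero _ _),
    stabilize f g h,
    fun m h₀ h₁ => HomologicalComplex.isIso_inl_f C _ (disk.isZero_X _ _ h₀ h₁),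
    fun m h₀ h₁ => HomologicalComplex.isIso_inl_f D _ (disk.isZero_X _ _ h₀ h₁),
    isIso_stabilize_f f g h w, fun m h₀ h₁ _ => isIso_stabilize_f_of_ne f g h h₀ h₁,
    ⟨stabilizeHomotopy f g h⟩⟩

end

end ChainComplex

/-- 1-skeleton alignment lemma (algebraic content): if `H₀(f)` is bijective and
`H₁(f)` is surjective, there are complexes `C'`, `D'` of f.g. free modules, chain
homotopy equivalences `a : C → C'`, `b : D → D'` which are isomorphisms in every
degree `≥ 3`, and a chain map `f' : C' → D'` which is an isomorphism in degrees
0 and 1, such that `f' ∘ a` is chain homotopic to `b ∘ f`. -/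
theorem statement9 {R : Type*} [Ring R]
    (C D : ChainComplex (ModuleCat R) ℕ) (f : C ⟶ D)
    (hCfree : ∀ n, Module.Free R (C.X n)) (hCfin : ∀ n, Module.Finite R (C.X n))
    (hDfree : ∀ n, Module.Free R (D.X n)) (hDfin : ∀ n, Module.Finite R (D.X n))
    (h0 : Function.Bijective (HomologicalComplex.homologyMap f 0))
    (h1 : Function.Surjective (HomologicalComplex.homologyMap f 1)) :
    ∃ (C' D' : ChainComplex (ModuleCat R) ℕ)
      (_ : ∀ n, Module.Free R (C'.X n)) (_ : ∀ n, Module.Finite R (C'.X n))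
      (_ : ∀ n, Module.Free R (D'.X n)) (_ : ∀ n, Module.Finite R (D'.X n))
      (a : HomotopyEquiv C C') (b : HomotopyEquiv D D') (f' : C' ⟶ D'),
      (∀ n, 3 ≤ n → IsIso (a.hom.f n)) ∧
      (∀ n, 3 ≤ n → IsIso (b.hom.f n)) ∧
      IsIso (f'.f 0) ∧ IsIso (f'.f 1) ∧
      Nonempty (Homotopy (a.hom ≫ f') (f ≫ b.hom)) := by
  have : Mono (HomologicalComplex.homologyMap f 0) := (ModuleCat.mono_iff_injective _).2 h0.1
  have : Epi (HomologicalComplex.homologyMap f 0) := (ModuleCat.epi_iff_surjective _).2 h0.2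
  have : IsIso (HomologicalComplex.homologyMap f 0) := isIso_of_mono_of_epi _
  have : Epi (HomologicalComplex.homologyMap f 1) := (ModuleCat.epi_iff_surjective _).2 h1
  obtain ⟨C₁, D₁, hC₁, hD₁, a₁, b₁, f₁, ha₁, hb₁, hf₁, -, ⟨H₁⟩⟩ :=
    ChainComplex.exists_isIso_f f (fun n => ⟨hCfree n, hCfin n⟩) (fun n => ⟨hDfree n, hDfin n⟩) 0
      (ChainComplex.exists_section_zero f)
  have e (i : ℕ) : HomologicalComplex.homologyMap f₁ i = (a₁.toHomologyIso i).inv ≫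
      HomologicalComplex.homologyMap f i ≫ (b₁.toHomologyIso i).hom := by
    rw [Iso.eq_inv_comp]
    simpa [HomologicalComplex.homologyMap_comp, HomotopyEquiv.toHomologyIso] using H₁.homologyMap_eq i
  have : Mono (HomologicalComplex.homologyMap f₁ 0) := by rw [e]; infer_instance
  have : Epi (HomologicalComplex.homologyMap f₁ 1) := by rw [e]; infer_instance
  have := (hD₁ 1).1
  obtain ⟨C₂, D₂, hC₂, hD₂, a₂, b₂, f₂, ha₂, hb₂, hf₂, hf₂', ⟨H₂⟩⟩ :=
    ChainComplex.exists_isIso_f f₁ hC₁ hD₁ 1 (ChainComplex.exists_section_one f₁)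
  refine ⟨C₂, D₂, fun n => (hC₂ n).1, fun n => (hC₂ n).2, fun n => (hD₂ n).1,
    fun n => (hD₂ n).2, a₁.trans a₂, b₁.trans b₂, f₂, fun n hn => ?_, fun n hn => ?_,
    hf₂' 0 (by simp) (by simp) hf₁, hf₂, ⟨?_⟩⟩
  · have := ha₁ n (by lia) (by lia)
    have := ha₂ n (by lia) (by lia)
    exact inferInstanceAs (IsIso (a₁.hom.f n ≫ a₂.hom.f n))
  · have := hb₁ n (by lia) (by lia)
    have := hb₂ n (by lia) (by lia)
    exact inferInstanceAs (IsIso (b₁.hom.f n ≫ b₂.hom.f n))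
  · exact (Homotopy.ofEq (Category.assoc _ _ _)).trans ((H₂.compLeft a₁.hom).trans
      ((Homotopy.ofEq (Category.assoc _ _ _).symm).trans ((H₁.compRight b₂.hom).trans
        (Homotopy.ofEq (Category.assoc _ _ _)))))
end
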